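/- arXiv:2301.04295 — 3 statements merged into one kernel-verified Lean document; each statement's English description precedes it below -/
import Mathlib

section
/- Let T be a nonempty string of length n whose last symbol occurs exactly once in T. Fix 1 ≤ i ≤ n, let c = T[i] and S = T[i+1:], so that T[i:] = c·S. Let U be the longest prefix of c·S that is an infix of S (the insertion point), and assume U is a type-2 node of LST(S). Let Z be a type-1 node of LST(S) such that U is a proper prefix of Z and no string V with U a proper prefix of V and V a proper prefix of Z is a type-1 node of LST(S). Then for every symbol d such that [d] ++ Z is a node of LST(S), the string [d] ++ U is a type-2 node of LST(c·S). -/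
/-- `U` is right-branching in `T`: there are distinct symbols `a ≠ b` with both
`U ++ [a]` and `U ++ [b]` infixes of `T`. -/
def RightBranching {σ : Type*} (T U : List σ) : Prop :=
  ∃ a b : σ, a ≠ b ∧ (U ++ [a]) <:+: T ∧ (U ++ [b]) <:+: T

/-- `U` is a type-1 node of `LST(T)`. -/
def LType1 {σ : Type*} (T U : List σ) : Prop :=
  U <:+: T ∧ (U = [] ∨ U <:+ T ∨ RightBranching T U)

/-- `U` is a type-2 node of `LST(T)`. -/
def LType2 {σ : Type*} (T U : List σ) : Prop :=
  U <:+: T ∧ ¬ LType1 T U ∧ LType1 T U.tail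

/-- `U` is a node of `LST(T)`: type-1 or type-2. -/
def LNode {σ : Type*} (T U : List σ) : Prop :=
  LType1 T U ∨ LType2 T U

/-- `U` occurs in `T` at (0-based) position `p`. -/
def OccursAt {σ : Type*} (T U : List σ) (p : ℕ) : Prop :=
  U <+: T.drop p ∧ p + U.length ≤ T.length

/-- `U` occurs exactly once in `T`. -/
def OccursOnce {σ : Type*} (T U : List σ) : Prop :=
  ∃! p : ℕ, OccursAt T U p

/-- `U` occurs at least twice in `T`. -/
def OccursTwice {σ : Type*} (T U : List σ) : Prop :=
  ∃ p q : ℕ, p ≠ q ∧ OccursAt T U p ∧ OccursAt T U q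

/-- `U` is a type-1 node of `preLST(T)`. -/
def PType1 {σ : Type*} (T U : List σ) : Prop :=
  U <:+: T ∧ (U = [] ∨ RightBranching T U ∨ (U ≠ [] ∧ U <:+ T ∧ OccursOnce T U))

/-- `U` is a type-2 node of `preLST(T)`. -/
def PType2 {σ : Type*} (T U : List σ) : Prop :=
  U <:+: T ∧ ¬ PType1 T U ∧ PType1 T U.tail

/-- `U` is a node of `preLST(T)`: type-1 or type-2. -/
def PNode {σ : Type*} (T U : List σ) : Prop :=
  PType1 T U ∨ PType2 T U

/-- Dropping the first symbol of an infix of `c :: S` leaves an infix of `S`. -/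
theorem infix_of_cons_infix_cons {σ : Type*} {c d : σ} {S W : List σ}
    (h : (d :: W) <:+: (c :: S)) : W <:+: S := by
  rcases List.infix_cons_iff.mp h with h | h
  · exact (List.cons_prefix_cons.mp h).2.isInfix
  · exact (List.suffix_cons d W).isInfix.trans h

/-- If `d·U` is a type-1 node of `LST(c·S)`, then `U` is a type-1 node of `LST(S)`. -/
theorem LType1.of_cons_cons {σ : Type*} {c d : σ} {S U : List σ}
    (h : LType1 (c :: S) (d :: U)) : LType1 S U := by
  obtain ⟨hinf, hnil | hsuf | ⟨a, b, hab, ha, hb⟩⟩ := h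
  · exact absurd hnil (List.cons_ne_nil d U)
  · refine ⟨infix_of_cons_infix_cons hinf, Or.inr (Or.inl ?_)⟩
    rcases List.suffix_cons_iff.mp hsuf with h | h
    · exact (List.cons.inj h).2 ▸ List.suffix_rfl
    · exact (List.suffix_cons d U).trans h
  · exact ⟨infix_of_cons_infix_cons hinf, Or.inr (Or.inr
      ⟨a, b, hab, infix_of_cons_infix_cons ha, infix_of_cons_infix_cons hb⟩)⟩

/-- A proper prefix extends by one symbol to a prefix. -/
theorem exists_append_singleton_prefix {σ : Type*} {U Z : List σ} (h : U <+: Z) (hne : U ≠ Z) :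
    ∃ a, (U ++ [a]) <+: Z := by
  obtain ⟨_ | ⟨a, Y⟩, rfl⟩ := h
  · simp at hne
  · exact ⟨a, Y, by simp⟩

/-- With `T[i:] = c·S`, `U` the insertion point (the longest prefix of
`c·S` that is an infix of `S`) assumed to be a type-2 node of `LST(S)`, and `Z`
the nearest type-1 descendant of `U` in `LST(S)`: for every symbol `d` such that
`d·Z` is a node of `LST(S)`, the string `d·U` is a type-2 node of `LST(c·S)`. -/
theorem stmt_6 {σ : Type*} [DecidableEq σ] (T : List σ) (hne : T ≠ [])
    (hterm : OccursOnce T [T.getLast hne])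
    (i : ℕ) (hi1 : 1 ≤ i) (hin : i ≤ T.length)
    (c : σ) (S : List σ) (hcs : T.drop (i - 1) = c :: S)
    (U : List σ) (hUpre : U <+: (c :: S)) (hUinf : U <:+: S)
    (hUlong : ∀ V : List σ, V <+: (c :: S) → V <:+: S → V.length ≤ U.length)
    (hU2 : LType2 S U)
    (Z : List σ) (hZ1 : LType1 S Z) (hUZ : U <+: Z) (hUZne : U ≠ Z)
    (hZmin : ∀ V : List σ, U <+: V → U ≠ V → V <+: Z → V ≠ Z → ¬ LType1 S V) :
    ∀ d : σ, LNode S (d :: Z) → LType2 (c :: S) (d :: U) := by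
  intro d hd
  have hdZ : (d :: Z) <:+: S := hd.elim And.left And.left
  have hdU : (d :: U) <:+: (c :: S) :=
    ((List.cons_prefix_cons.mpr ⟨rfl, hUZ⟩).isInfix.trans hdZ).trans
      (List.suffix_cons c S).isInfix
  refine ⟨hdU, fun h => hU2.2.1 h.of_cons_cons, infix_of_cons_infix_cons hdU |>.trans
    (List.suffix_cons c S).isInfix, Or.inr (Or.inr ?_)⟩
  have hUcS : U ≠ c :: S := by
    rintro rfl
    simpa using hUinf.length_le
  obtain ⟨a, ha⟩ := exists_append_singleton_prefix hUpre hUcS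
  obtain ⟨b, hb⟩ := exists_append_singleton_prefix hUZ hUZne
  have hbS : (U ++ [b]) <:+: S := hb.isInfix.trans hZ1.1
  refine ⟨a, b, ?_, ha.isInfix, hbS.trans (List.suffix_cons c S).isInfix⟩
  rintro rfl
  simpa using hUlong _ ha hbS
end

section
/- Let W be a nonempty string and let k = k(W) be its active position, i.e., the least index k such that the suffix W[k:] occurs at least twice in W. Then there exists an index l with 1 ≤ l ≤ k such that for every j with 1 ≤ j < k: the string obtained from the suffix W[j:] by removing its last symbol is a node of preLST(W) if and only if j ≥ l. (Equivalently, among the leaves W[j:] of preLST(W) for 1 ≤ j < k, W[j:] is a +-node exactly for j < l, where a leaf is a +-node iff the string obtained by removing its last symbol is not a node of preLST(W).) -/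
theorem RightBranching.tail {σ : Type*} {T U : List σ} (hU : U ≠ [])
    (h : RightBranching T U) : RightBranching T U.tail := by
  obtain ⟨a, b, hab, ha, hb⟩ := h
  obtain ⟨x, V, rfl⟩ := List.exists_cons_of_ne_nil hU
  exact ⟨a, b, hab, (List.suffix_cons x (V ++ [a])).isInfix.trans ha,
    (List.suffix_cons x (V ++ [b])).isInfix.trans hb⟩

theorem pType1_nil {σ : Type*} (T : List σ) : PType1 T [] :=
  ⟨List.nil_infix, Or.inl rfl⟩

/-- A suffix of `T` that also arises by dropping the last symbol of a nonempty suffix of `T`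
has two occurrences in `T`. -/
theorem not_occursOnce_dropLast_drop {σ : Type*} {T : List σ} {i : ℕ} (hi : i < T.length)
    (hsuf : (T.drop i).dropLast <:+ T) : ¬ OccursOnce T (T.drop i).dropLast := by
  intro honce
  have hlen : (T.drop i).dropLast.length = T.length - i - 1 := by simp
  have hfirst : OccursAt T (T.drop i).dropLast i :=
    ⟨List.dropLast_prefix _, by omega⟩
  have hsecond : OccursAt T (T.drop i).dropLast (i + 1) := by
    refine ⟨?_, by omega⟩
    have heq := List.suffix_iff_eq_drop.mp hsuf
    rw [hlen, show T.length - (T.length - i - 1) = i + 1 by omega] at heq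
    rw [heq]
  have := honce.unique hfirst hsecond
  omega

theorem PNode.pType1_dropLast_drop_succ {σ : Type*} {T : List σ} {i : ℕ}
    (h : PNode T (T.drop i).dropLast) : PType1 T (T.drop (i + 1)).dropLast := by
  have htail : (T.drop (i + 1)).dropLast = (T.drop i).dropLast.tail := by
    rw [List.tail_dropLast, List.tail_drop]
  rcases h with ⟨hinf, hnil | hbr | ⟨hU, hsuf, honce⟩⟩ | ⟨-, -, h⟩
  · rw [htail, hnil]
    exact pType1_nil T
  · by_cases hU : (T.drop i).dropLast = []
    · rw [htail, hU]
      exact pType1_nil T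
    · rw [htail]
      exact ⟨(List.tail_suffix _).isInfix.trans hinf, Or.inr (Or.inl (hbr.tail hU))⟩
  · refine absurd honce (not_occursOnce_dropLast_drop ?_ hsuf)
    by_contra hi
    exact hU (by rw [List.drop_eq_nil_of_le (not_lt.mp hi), List.dropLast_nil])
  · rwa [htail]

theorem PNode.dropLast_drop_mono {σ : Type*} {T : List σ} {i j : ℕ} (hij : i ≤ j)
    (h : PNode T (T.drop i).dropLast) : PNode T (T.drop j).dropLast := by
  induction j, hij using Nat.le_induction with
  | base => exact h
  | succ j _ ih => exact Or.inl ih.pType1_dropLast_drop_succ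

/-- Let `k` be the active position of a nonempty string `W`.  Then
there is a boundary `l` with `1 ≤ l ≤ k` such that for all `1 ≤ j < k`, the string
obtained from the leaf `W[j:]` by removing its last symbol is a node of
`preLST(W)` iff `j ≥ l`. -/
theorem stmt_7 {σ : Type*} [DecidableEq σ] (W : List σ) (hne : W ≠ [])
    (k : ℕ) (hk1 : 1 ≤ k) (hk2 : k ≤ W.length + 1)
    (hkocc : OccursTwice W (W.drop (k - 1)))
    (hkmin : ∀ j : ℕ, 1 ≤ j → j < k → ¬ OccursTwice W (W.drop (j - 1))) :
    ∃ l : ℕ, 1 ≤ l ∧ l ≤ k ∧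
      ∀ j : ℕ, 1 ≤ j → j < k →
        (PNode W (W.drop (j - 1)).dropLast ↔ l ≤ j) := by
  classical
  have hex : ∃ l, 1 ≤ l ∧ (l = k ∨ PNode W (W.drop (l - 1)).dropLast) :=
    ⟨k, hk1, Or.inl rfl⟩
  refine ⟨Nat.find hex, (Nat.find_spec hex).1, Nat.find_min' hex ⟨hk1, Or.inl rfl⟩,
    fun j hj hjk => ⟨fun h => Nat.find_min' hex ⟨hj, Or.inr h⟩, fun hlj => ?_⟩⟩
  rcases (Nat.find_spec hex).2 with heq | h
  · omega
  · exact h.dropLast_drop_mono (by omega)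
end

section
/- Let W be a nonempty string, a a symbol, and W' = W ++ [a]. Let k = k(W) be the active position of W, i.e., the least index k such that the suffix W[k:] occurs at least twice in W. Then for every j with 1 ≤ j < k − 1, the suffix W[j:] (a leaf of preLST(W)) is not a node of preLST(W'): it is neither a type-1 nor a type-2 node of preLST(W'). -/
theorem List.IsInfix.exists_occursAt {σ : Type*} {T U : List σ} (h : U <:+: T) :
    ∃ p, OccursAt T U p := by
  obtain ⟨X, Y, rfl⟩ := h
  exact ⟨X.length, by simp, by simp⟩

theorem occursAt_drop {σ : Type*} (W : List σ) {m : ℕ} (hm : m ≤ W.length) :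
    OccursAt W (W.drop m) m :=
  ⟨List.prefix_refl _, by simp; omega⟩

theorem List.IsSuffix.occursAt {σ : Type*} {T U : List σ} (h : U <:+ T) :
    OccursAt T U (T.length - U.length) := by
  obtain ⟨X, rfl⟩ := h
  exact ⟨by simp, by simp⟩

theorem OccursAt.append_right {σ : Type*} {T U : List σ} {p : ℕ} (h : OccursAt T U p)
    (S : List σ) : OccursAt (T ++ S) U p := by
  obtain ⟨h₁, h₂⟩ := h
  refine ⟨?_, by simp; omega⟩
  rw [List.drop_append_of_le_length (by omega)]
  exact h₁.trans (List.prefix_append _ _)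

theorem OccursAt.of_append_singleton {σ : Type*} {T U : List σ} {a b : σ} {p : ℕ}
    (h : OccursAt (T ++ [a]) (U ++ [b]) p) : OccursAt T U p := by
  obtain ⟨h₁, h₂⟩ := h
  simp only [List.length_append, List.length_singleton] at h₂
  refine ⟨?_, by omega⟩
  rw [List.drop_append_of_le_length (by omega)] at h₁
  exact List.prefix_of_prefix_length_le ((List.prefix_append U [b]).trans h₁)
    (List.prefix_append _ _) (by simp; omega)

theorem OccursAt.last_unique {σ : Type*} {T U : List σ} {b c : σ} {p : ℕ}
    (hb : OccursAt T (U ++ [b]) p) (hc : OccursAt T (U ++ [c]) p) : b = c := by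
  have h := List.prefix_of_prefix_length_le hb.1 hc.1 (by simp)
  simpa using h.eq_of_length (by simp)

/-- If `U` occurs at most once in `T`, then it is not right-branching in `T ++ [a]`. -/
theorem not_rightBranching_append_singleton {σ : Type*} {T U : List σ}
    (h : ¬ OccursTwice T U) (a : σ) : ¬ RightBranching (T ++ [a]) U := by
  rintro ⟨b, c, hbc, hb, hc⟩
  obtain ⟨p, hp⟩ := hb.exists_occursAt
  obtain ⟨q, hq⟩ := hc.exists_occursAt
  by_cases hpq : p = q
  · subst hpq
    exact hbc (hp.last_unique hq)
  · exact h ⟨p, q, hpq, hp.of_append_singleton, hq.of_append_singleton⟩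

/-- A nonempty suffix of `W` that does not repeat in `W` is not a type-1 node of
`preLST(W ++ [a])`. -/
theorem not_pType1_append_singleton {σ : Type*} {W : List σ} {m : ℕ} (hm : m < W.length)
    (h : ¬ OccursTwice W (W.drop m)) (a : σ) : ¬ PType1 (W ++ [a]) (W.drop m) := by
  rintro ⟨-, hnil | hbr | ⟨-, hsuf, hone⟩⟩
  · rw [List.drop_eq_nil_iff] at hnil
    omega
  · exact not_rightBranching_append_singleton h a hbr
  · have hpos := hone.unique ((occursAt_drop W hm.le).append_right [a]) hsuf.occursAt
    simp only [List.length_append, List.length_singleton, List.length_drop] at hpos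
    omega

/-- Let `k` be the active position of a nonempty string `W` and
`W' = W ++ [a]`.  For every `1 ≤ j < k - 1`, the leaf `W[j:]` of `preLST(W)` is
not a node of `preLST(W')`. -/
theorem stmt_8 {σ : Type*} [DecidableEq σ] (W : List σ) (hne : W ≠ []) (a : σ)
    (k : ℕ) (hk1 : 1 ≤ k) (hk2 : k ≤ W.length + 1)
    (hkocc : OccursTwice W (W.drop (k - 1)))
    (hkmin : ∀ j : ℕ, 1 ≤ j → j < k → ¬ OccursTwice W (W.drop (j - 1))) :
    ∀ j : ℕ, 1 ≤ j → j + 1 < k → ¬ PNode (W ++ [a]) (W.drop (j - 1)) := by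
  intro j hj hjk hnode
  rcases hnode with h | ⟨-, -, h⟩
  · exact not_pType1_append_singleton (by omega) (hkmin j hj (by omega)) a h
  · rw [List.tail_drop, Nat.sub_add_cancel hj] at h
    exact not_pType1_append_singleton (by omega) (hkmin (j + 1) (by omega) hjk) a h
end
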